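/- arXiv:2410.23440 — 2 statements merged into one kernel-verified Lean document; each statement's English description precedes it below -/
import Mathlib

section
/- Let α, β > 0 and λ_i := exp(−α·i^β) for every i ≥ 1, let u_γ := (1 + Σ_{i≥1} γ_i/λ_i)^{-1/2} for γ ∈ Γ, and let π be a bijection from the positive integers onto Γ with u_{π(1)} ≥ u_{π(2)} ≥ ⋯. Then for every δ with 0 < δ < β there exist a constant c > 0 and s̄ ∈ ℕ (depending on α, β, δ) such that for all s ≥ s̄ one has u_{π(s+1)} ≥ c · exp( −(1/2) · α^{1/(β+1)} · ((β+1)/(β−δ))^{1/(1+1/β)} · (log(s+1))^{1/(1+1/β)} ). -/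
open Finset

/-- The set of multi-indices: finitely supported sequences of nonnegative
integers indexed by the positive integers. -/
abbrev MultiIndex : Type := ℕ+ →₀ ℕ

/-- The weight `u_γ = (1 + ∑_{i ≥ 1} γ_i / λ_i)^{-1/2}`. -/
noncomputable def uweight (lam : ℕ+ → ℝ) (γ : MultiIndex) : ℝ :=
  (1 + ∑ i ∈ γ.support, (γ i : ℝ) / lam i) ^ (-(1 : ℝ) / 2)

lemma aux_sum (β : ℝ) (hβ : 0 < β) (d : ℕ) :
    ∑ k ∈ Finset.range d, ((k : ℝ) + 1) ^ β ≤ ((d : ℝ) + 1) ^ (β + 1) / (β + 1) := by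
  induction d with
  | zero => simp; positivity
  | succ n ih =>
    rw [Finset.sum_range_succ]
    have hx : (0 : ℝ) < (n : ℝ) + 1 := by positivity
    have hb : 1 + (β + 1) * (1 / ((n : ℝ) + 1)) ≤ (1 + 1 / ((n : ℝ) + 1)) ^ (β + 1) := by
      apply one_add_mul_self_le_rpow_one_add
      · have : 0 < 1 / ((n : ℝ) + 1) := by positivity
        linarith
      · linarith
    have e : ((n : ℝ) + 1 + 1) ^ (β + 1)
        = ((n : ℝ) + 1) ^ (β + 1) * (1 + 1 / ((n : ℝ) + 1)) ^ (β + 1) := by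
      rw [← Real.mul_rpow hx.le (by positivity)]
      congr 1
      field_simp
    have e2 : ((n : ℝ) + 1) ^ (β + 1) = ((n : ℝ) + 1) ^ β * ((n : ℝ) + 1) := by
      rw [Real.rpow_add hx, Real.rpow_one]
    have h3 := mul_le_mul_of_nonneg_left hb (Real.rpow_nonneg hx.le (β + 1))
    rw [← e] at h3
    have h4 : ((n : ℝ) + 1) ^ (β + 1) * (1 + (β + 1) * (1 / ((n : ℝ) + 1)))
        = ((n : ℝ) + 1) ^ (β + 1) + (β + 1) * ((n : ℝ) + 1) ^ β := by
      rw [e2]; field_simp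
    rw [h4] at h3
    push_cast
    rw [le_div_iff₀ (by linarith)] at ih ⊢
    linarith

lemma aux_asymp (α β δ : ℝ) (hα : 0 < α) (hβ : 0 < β) (hδ : 0 < δ) :
    ∀ᶠ y : ℝ in Filter.atTop,
      α * y ^ (β + 1) * ((β - δ) / (β + 1)) ≤
        (y - 1) * (α * y ^ β) - y * Real.log y - α * ((y + 1) ^ (β + 1) / (β + 1)) := by
  have t1 : Filter.Tendsto (fun y : ℝ => 1 / y) Filter.atTop (nhds 0) := by
    simpa using tendsto_inv_atTop_zero (𝕜 := ℝ)
  have t2 : Filter.Tendsto (fun y : ℝ => Real.log y / y ^ β) Filter.atTop (nhds 0) :=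
    (isLittleO_log_rpow_atTop hβ).tendsto_div_nhds_zero
  have t3 : Filter.Tendsto (fun y : ℝ => (1 + 1 / y) ^ (β + 1)) Filter.atTop (nhds 1) := by
    have := (t1.const_add 1).rpow_const (p := β + 1) (Or.inl (by norm_num))
    simpa using this
  have t : Filter.Tendsto (fun y : ℝ => (1 - 1 / y) * α - Real.log y / y ^ β
      - α * ((1 + 1 / y) ^ (β + 1) / (β + 1))) Filter.atTop
      (nhds ((1 - 0) * α - 0 - α * (1 / (β + 1)))) :=
    (((t1.const_sub 1).mul_const α).sub t2).sub ((t3.div_const _).const_mul α)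
  have hlt : α * ((β - δ) / (β + 1)) < (1 - 0) * α - 0 - α * (1 / (β + 1)) := by
    have : (1 - 0) * α - 0 - α * (1 / (β + 1)) = α * (β / (β + 1)) := by
      field_simp; ring
    rw [this]
    gcongr
    linarith
  filter_upwards [t.eventually (lt_mem_nhds hlt), Filter.eventually_gt_atTop 0] with y hy hy0
  have hyb : 0 < y ^ β := Real.rpow_pos_of_pos hy0 _
  have e2 : y ^ (β + 1) = y ^ β * y := by
    rw [Real.rpow_add hy0, Real.rpow_one]
  have e : (y + 1) ^ (β + 1) = y ^ (β + 1) * (1 + 1 / y) ^ (β + 1) := by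
    rw [← Real.mul_rpow hy0.le (by positivity)]
    congr 1
    field_simp
  have h := mul_le_mul_of_nonneg_left hy.le (mul_pos hyb hy0).le
  rw [e, e2]
  have e5 : (y ^ β * y) * ((1 - 1 / y) * α - Real.log y / y ^ β
      - α * ((1 + 1 / y) ^ (β + 1) / (β + 1))) = (y - 1) * (α * y ^ β) - y * Real.log y -
      α * (y ^ β * y * (1 + 1 / y) ^ (β + 1) / (β + 1)) := by
    field_simp
  rw [e5] at h
  linarith

lemma aux_count (α β : ℝ)
    (lam : ℕ+ → ℝ) (hlam : ∀ i : ℕ+, lam i = Real.exp (-(α * (i : ℝ) ^ β)))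
    (d : ℕ) (hd : 1 ≤ d) (L : ℝ) :
    ∃ F : Finset MultiIndex, (∀ γ ∈ F, ∑ i ∈ γ.support, (γ i : ℝ) / lam i ≤ Real.exp L) ∧
      Real.exp (d * L - d * Real.log d - α * ∑ k ∈ Finset.range d, ((k : ℝ) + 1) ^ β)
        ≤ (F.card : ℝ) := by
  have hd0 : (0 : ℝ) < d := by exact_mod_cast hd
  have lpos : ∀ i, 0 < lam i := fun i => by rw [hlam]; exact Real.exp_pos _
  let S : Finset ℕ+ := (Finset.range d).map ⟨Nat.succPNat, Nat.succPNat_injective⟩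
  let n : ℕ+ → ℕ := fun i => ⌊Real.exp L * lam i / d⌋₊
  refine ⟨S.finsupp (fun i => Finset.range (n i + 1)), ?_, ?_⟩
  · intro γ hγ
    rw [Finset.mem_finsupp_iff] at hγ
    obtain ⟨h1, h2⟩ := hγ
    calc ∑ i ∈ γ.support, (γ i : ℝ) / lam i ≤ ∑ i ∈ S, (γ i : ℝ) / lam i :=
          Finset.sum_le_sum_of_subset_of_nonneg h1
            (fun i _ _ => div_nonneg (Nat.cast_nonneg _) (lpos i).le)
      _ ≤ ∑ i ∈ S, Real.exp L / d := by
          apply Finset.sum_le_sum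
          intro i hi
          have h3 := h2 i hi
          rw [Finset.mem_range, Nat.lt_succ_iff] at h3
          have h4 : (γ i : ℝ) ≤ Real.exp L * lam i / d :=
            le_trans (by exact_mod_cast h3) (Nat.floor_le
              (div_nonneg (mul_nonneg (Real.exp_pos _).le (lpos i).le) hd0.le))
          rw [div_le_iff₀ (lpos i)]
          calc (γ i : ℝ) ≤ _ := h4
            _ = _ := by ring
      _ = Real.exp L := by
          simp [S]
          field_simp
  · rw [Finset.card_finsupp]
    push_cast
    simp only [Finset.card_range, S, Finset.prod_map, Function.Embedding.coeFn_mk]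
    have e : (d * L - d * Real.log d - α * ∑ k ∈ Finset.range d, ((k : ℝ) + 1) ^ β)
        = ∑ k ∈ Finset.range d, (L - Real.log d - α * ((k : ℝ) + 1) ^ β) := by
      rw [Finset.sum_sub_distrib, ← Finset.mul_sum]
      simp
    rw [e, Real.exp_sum]
    apply Finset.prod_le_prod
    · intro i _; exact (Real.exp_pos _).le
    · intro k _
      have h1 : Real.exp (L - Real.log d - α * ((k : ℝ) + 1) ^ β)
          = Real.exp L * lam (Nat.succPNat k) / d := by
        rw [hlam, sub_eq_add_neg, Real.exp_add, Real.exp_sub, Real.exp_log hd0]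
        simp
        ring
      rw [h1]
      push_cast
      exact (Nat.lt_floor_add_one _).le

theorem uweight_lower_bound_exponential
    (α β : ℝ) (hα : 0 < α) (hβ : 0 < β)
    (lam : ℕ+ → ℝ) (hlam : ∀ i : ℕ+, lam i = Real.exp (-(α * (i : ℝ) ^ β)))
    (π : ℕ+ → MultiIndex) (hbij : Function.Bijective π)
    (hdec : Antitone fun n => uweight lam (π n))
    (δ : ℝ) (hδ : 0 < δ) (hδβ : δ < β) :
    ∃ c : ℝ, 0 < c ∧ ∃ sbar : ℕ+, ∀ s : ℕ+, sbar ≤ s →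
      c * Real.exp (-(1 / 2 * α ^ ((1 : ℝ) / (β + 1))
            * ((β + 1) / (β - δ)) ^ ((1 : ℝ) / (1 + 1 / β))
            * (Real.log ((s : ℝ) + 1)) ^ ((1 : ℝ) / (1 + 1 / β))))
        ≤ uweight lam (π (s + 1)) := by
  have lpos : ∀ i, 0 < lam i := fun i => by rw [hlam]; exact Real.exp_pos _
  have hbd : 0 < β - δ := by linarith
  have hK : 0 < (β + 1) / (β - δ) / α := by positivity
  -- y as a function of s
  let Y : ℝ → ℝ := fun x => ((β + 1) / (β - δ) / α * Real.log (x + 1)) ^ (1 / (β + 1))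
  have tY : Filter.Tendsto Y Filter.atTop Filter.atTop := by
    apply (tendsto_rpow_atTop (y := 1 / (β + 1)) (by positivity)).comp
    apply Filter.Tendsto.const_mul_atTop hK
    exact Real.tendsto_log_atTop.comp (Filter.tendsto_atTop_add_const_right _ 1 Filter.tendsto_id)
  have ev := tY.eventually ((aux_asymp α β δ hα hβ hδ).and (Filter.eventually_ge_atTop 1))
  obtain ⟨x0, hx0⟩ := Filter.eventually_atTop.1 ev
  obtain ⟨N, hN⟩ := exists_nat_ge x0
  refine ⟨2 ^ (-(1 : ℝ) / 2), by positivity, Nat.succPNat N, ?_⟩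
  intro s hs
  have hsx : x0 ≤ (s : ℝ) := by
    have : N + 1 ≤ (s : ℕ) := hs
    have : ((N : ℝ) + 1) ≤ (s : ℕ) := by exact_mod_cast this
    have h : x0 ≤ ((s : ℕ) : ℝ) := by linarith
    exact h
  obtain ⟨hy, hy1⟩ := hx0 _ hsx
  set y := Y s with hydef
  have hs0 : (0 : ℝ) < (s : ℝ) := by exact_mod_cast s.pos
  set X := Real.log ((s : ℝ) + 1) with hX
  have hX0 : 0 < X := Real.log_pos (by linarith)
  have hy0 : 0 < y := by linarith
  have hyX : α * y ^ (β + 1) * ((β - δ) / (β + 1)) = X := by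
    have : y ^ (β + 1) = (β + 1) / (β - δ) / α * X := by
      simp only [hydef, Y]
      rw [← Real.rpow_mul (by positivity), one_div_mul_cancel (by positivity), Real.rpow_one]
    rw [this]
    field_simp
  have hL : α ^ ((1 : ℝ) / (β + 1))
            * ((β + 1) / (β - δ)) ^ ((1 : ℝ) / (1 + 1 / β))
            * X ^ ((1 : ℝ) / (1 + 1 / β)) = α * y ^ β := by
    have hp : (1 : ℝ) / (1 + 1 / β) = 1 / (β + 1) * β := by field_simp
    simp only [hydef, Y]
    rw [← Real.rpow_mul (by positivity), ← hX, hp, Real.mul_rpow (by positivity) (by positivity),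
      Real.div_rpow (x := (β + 1) / (β - δ)) (y := α) (by positivity) (by positivity)]
    have : α ^ ((1 : ℝ) / (β + 1)) = α / α ^ (1 / (β + 1) * β) := by
      rw [eq_div_iff (by positivity), ← Real.rpow_add hα]
      have : 1 / (β + 1) + 1 / (β + 1) * β = 1 := by field_simp; ring
      rw [this, Real.rpow_one]
    rw [this]
    ring
  set L := α * y ^ β with hLd
  have hL0 : 0 < L := by positivity
  have hd : 1 ≤ ⌊y⌋₊ := Nat.one_le_floor_iff _ |>.2 hy1
  obtain ⟨F, hF1, hF2⟩ := aux_count α β lam hlam ⌊y⌋₊ hd L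
  set d := ⌊y⌋₊ with hdd
  have hd0 : (0 : ℝ) < d := by exact_mod_cast hd
  have hdy : (d : ℝ) ≤ y := Nat.floor_le hy0.le
  have hyd : y - 1 ≤ d := by have := Nat.lt_floor_add_one y; linarith
  have hcard : (s : ℝ) + 1 ≤ F.card := by
    refine le_trans ?_ hF2
    rw [← Real.exp_log (show (0 : ℝ) < (s : ℝ) + 1 by linarith), ← hX, Real.exp_le_exp,
      ← hyX]
    refine hy.trans ?_
    have g1 : (y - 1) * L ≤ d * L := by gcongr
    have g2 : d * Real.log d ≤ y * Real.log y := by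
      have : 0 ≤ Real.log d := Real.log_nonneg (by exact_mod_cast hd)
      gcongr
    have g3 : α * ∑ k ∈ Finset.range d, ((k : ℝ) + 1) ^ β
        ≤ α * ((y + 1) ^ (β + 1) / (β + 1)) := by
      refine mul_le_mul_of_nonneg_left ((aux_sum β hβ d).trans ?_) hα.le
      gcongr
    linarith
  have hFu : ∀ γ ∈ F, (2 : ℝ) ^ (-(1 : ℝ) / 2) * Real.exp (-(1 / 2 * L)) ≤ uweight lam γ := by
    intro γ hγ
    have h1 := hF1 γ hγ
    have hnn : 0 ≤ ∑ i ∈ γ.support, (γ i : ℝ) / lam i :=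
      Finset.sum_nonneg fun i _ => div_nonneg (Nat.cast_nonneg _) (lpos i).le
    have h2 : Real.exp (-(1 / 2 * L)) = Real.exp L ^ (-(1 : ℝ) / 2) := by
      rw [← Real.exp_mul]; congr 1; ring
    rw [h2, ← Real.mul_rpow (by norm_num) (Real.exp_pos _).le, uweight]
    apply Real.rpow_le_rpow_of_nonpos (by positivity) _ (by norm_num)
    have := Real.one_le_exp hL0.le
    linarith
  rw [show 1 / 2 * α ^ ((1 : ℝ) / (β + 1))
            * ((β + 1) / (β - δ)) ^ ((1 : ℝ) / (1 + 1 / β))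
            * X ^ ((1 : ℝ) / (1 + 1 / β)) = 1 / 2 * L by rw [← hL]; ring]
  by_contra hcon
  push Not at hcon
  have hsub : F ⊆ (Finset.Icc 1 s).image π := by
    intro γ hγ
    obtain ⟨n, rfl⟩ := hbij.2 γ
    refine Finset.mem_image_of_mem _ (Finset.mem_Icc.2 ⟨PNat.one_le n, ?_⟩)
    by_contra hn
    push Not at hn
    have := hdec (PNat.add_one_le_iff.2 hn)
    have h2 := hFu _ hγ
    simp only at this
    linarith
  have hc := (Finset.card_le_card hsub).trans Finset.card_image_le
  rw [PNat.card_Icc] at hc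
  simp at hc
  have : (F.card : ℝ) ≤ ((s : ℕ) : ℝ) := by exact_mod_cast hc
  linarith
end

section
/- Let d ≥ 1 be an integer, let I be a finite set of multi-indices in ℕ_0^d, and let ε > 0. Then there exists R̄ > 0 such that for every R ≥ R̄ and every family of real coefficients (x_γ)_{γ∈I} one has (1 − ε)·Σ_{γ∈I} x_γ² ≤ ∫_{ℝ^d} ( Σ_{γ∈I} x_γ H̃_{γ,R,d}(t) )² dμ_d(t) ≤ (1 + ε)·Σ_{γ∈I} x_γ². In particular, for R ≥ R̄ the family {H̃_{γ,R,d}}_{γ∈I} is a Riesz system in L²(μ_d) with Riesz constants at worst 1 ± ε. -/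
open Finset MeasureTheory ProbabilityTheory Filter

/-- The `n`-th normalized probabilist's Hermite polynomial: the monic
probabilist's Hermite polynomial divided by `√(n!)`. -/
noncomputable def normHermite (n : ℕ) (x : ℝ) : ℝ :=
  (Polynomial.aeval x (Polynomial.hermite n)) / Real.sqrt (Nat.factorial n)

/-- The capped Hermite polynomial `H̃_{n,R}`. -/
noncomputable def cappedHermite (n : ℕ) (R : ℝ) (x : ℝ) : ℝ :=
  if x > R then normHermite n R
  else if x < -R then normHermite n (-R)
  else normHermite n x


section helpers
open Polynomial Topology

lemma integrable_abs_pow_g (n : ℕ) : Integrable (fun x : ℝ => |x| ^ n) (gaussianReal 0 1) := by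
  have h := (memLp_id_gaussianReal' (μ := 0) (v := 1) (n : ENNReal) (by simp)).integrable_norm_pow'
  simpa using h

lemma integrable_poly_abs_g (p : ℝ[X]) : Integrable (fun x : ℝ => p.eval |x|) (gaussianReal 0 1) := by
  simp only [Polynomial.eval_eq_sum_range]
  exact integrable_finsetSum _ fun i _ => (integrable_abs_pow_g i).const_mul _

lemma integrable_poly_g (p : ℝ[X]) : Integrable (fun x : ℝ => p.eval x) (gaussianReal 0 1) := by
  simp only [Polynomial.eval_eq_sum_range]
  refine integrable_finsetSum _ fun i _ => Integrable.const_mul ?_ _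
  refine (integrable_abs_pow_g i).mono' (by fun_prop) (ae_of_all _ fun x => ?_)
  simp

lemma integrable_pdf_mul (f : ℝ → ℝ) (hf : Integrable f (gaussianReal 0 1)) :
    Integrable (fun x => gaussianPDFReal 0 1 x * f x) := by
  rw [gaussianReal_of_var_ne_zero _ one_ne_zero,
    integrable_withDensity_iff_integrable_smul' (measurable_gaussianPDF _ _)
      (ae_of_all _ fun _ => gaussianPDF_lt_top)] at hf
  simpa using hf

lemma stein_poly (p : ℝ[X]) : ∫ x, (X * p - derivative p).eval x ∂(gaussianReal 0 1) = 0 := by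
  rw [integral_gaussianReal_eq_integral_smul one_ne_zero]
  have hd : ∀ x, HasDerivAt (fun x => -(gaussianPDFReal 0 1 x * p.eval x))
      (gaussianPDFReal 0 1 x * (X * p - derivative p).eval x) x := by
    intro x
    have h1 : HasDerivAt (fun x : ℝ => gaussianPDFReal 0 1 x) (gaussianPDFReal 0 1 x * (-x)) x := by
      unfold gaussianPDFReal
      have h : HasDerivAt (fun x : ℝ => -(x - 0) ^ 2 / (2 * ((1 : NNReal) : ℝ))) (-x) x := by
        have := (((hasDerivAt_id x).sub_const 0).pow 2).neg.div_const (2 * ((1 : NNReal) : ℝ))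
        refine this.congr_deriv ?_
        simp
        ring
      refine (h.exp.const_mul _).congr_deriv ?_
      ring
    refine (h1.mul (p.hasDerivAt x)).neg.congr_deriv ?_
    simp
    ring
  have := integral_eq_zero_of_hasDerivAt_of_integrable hd
    (integrable_pdf_mul _ (integrable_poly_g _)) (integrable_pdf_mul _ (integrable_poly_g _)).neg
  simpa using this

noncomputable def hermR (n : ℕ) : ℝ[X] := (hermite n).map (Int.castRingHom ℝ)

lemma hermR_succ (n : ℕ) : hermR (n + 1) = X * hermR n - derivative (hermR n) := by
  simp [hermR, hermite_succ, derivative_map]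

lemma integral_hermR_mul (n : ℕ) : ∀ q : ℝ[X], ∫ x, (hermR n * q).eval x ∂(gaussianReal 0 1)
    = ∫ x, (derivative^[n] q).eval x ∂(gaussianReal 0 1) := by
  induction n with
  | zero => intro q; simp [hermR]
  | succ n ih =>
    intro q
    rw [Function.iterate_succ_apply, ← ih, ← sub_eq_zero, ← integral_sub (integrable_poly_g _)
      (integrable_poly_g _)]
    refine Eq.trans (integral_congr_ae (ae_of_all _ fun x => ?_)) (stein_poly (hermR n * q))
    rw [hermR_succ]
    simp
    ring

lemma natDegree_hermR (n : ℕ) : (hermR n).natDegree = n := by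
  rw [hermR, (hermite_monic n).natDegree_map, natDegree_hermite]

lemma iter_hermR (n : ℕ) : derivative^[n] (hermR n) = C (n.factorial : ℝ) := by
  have h0 : (derivative^[n] (hermR n)).natDegree = 0 := by
    have := natDegree_iterate_derivative (hermR n) n
    rw [natDegree_hermR] at this
    omega
  rw [eq_C_of_natDegree_eq_zero h0, coeff_iterate_derivative]
  simp [hermR, Nat.descFactorial_self, coeff_hermite_self]

lemma integral_hermR (n m : ℕ) : ∫ x, (hermR n * hermR m).eval x ∂(gaussianReal 0 1)
    = if n = m then (n.factorial : ℝ) else 0 := by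
  have key : ∀ a b, b < a → ∫ x, (hermR a * hermR b).eval x ∂(gaussianReal 0 1) = 0 := by
    intro a b h
    rw [integral_hermR_mul, iterate_derivative_eq_zero (by rwa [natDegree_hermR])]
    simp
  split_ifs with h
  · subst h
    rw [integral_hermR_mul, iter_hermR]
    simp
  · rcases lt_or_gt_of_ne h with h | h
    · rw [mul_comm]; exact key _ _ h
    · exact key _ _ h

lemma normHermite_eq (n : ℕ) (x : ℝ) :
    normHermite n x = (hermR n).eval x / Real.sqrt (Nat.factorial n) := by
  simp [normHermite, hermR, aeval_def, eval_map]

lemma integral_normHermite (n m : ℕ) :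
    ∫ x, normHermite n x * normHermite m x ∂(gaussianReal 0 1) = if n = m then 1 else 0 := by
  have : ∀ x, normHermite n x * normHermite m x = (hermR n * hermR m).eval x *
      (Real.sqrt (Nat.factorial n) * Real.sqrt (Nat.factorial m))⁻¹ := by
    intro x
    simp only [normHermite_eq, eval_mul]
    rw [div_mul_div_comm, div_eq_mul_inv]
  simp only [this]
  rw [integral_mul_const, integral_hermR]
  split_ifs with h
  · subst h
    rw [Real.mul_self_sqrt (by positivity)]
    exact mul_inv_cancel₀ (by positivity)
  · simp

/-- dominating polynomial -/
noncomputable def domP (n : ℕ) : ℝ[X] := ∑ i ∈ range (n + 1), C (|(hermR n).coeff i|) * X ^ i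

lemma abs_hermR_le (n : ℕ) (x y : ℝ) (h : |y| ≤ |x|) : |normHermite n y| ≤ (domP n).eval |x| := by
  have h1 : |(hermR n).eval y| ≤ (domP n).eval |x| := by
    rw [Polynomial.eval_eq_sum_range, natDegree_hermR, domP, eval_finsetSum]
    refine (Finset.abs_sum_le_sum_abs _ _).trans (Finset.sum_le_sum fun i _ => ?_)
    simp only [eval_mul, eval_C, eval_pow, eval_X, abs_mul, abs_pow]
    gcongr
  rw [normHermite_eq, abs_div]
  refine (div_le_self (abs_nonneg _) ?_).trans h1
  rw [abs_of_nonneg (Real.sqrt_nonneg _), Real.one_le_sqrt]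
  exact_mod_cast Nat.factorial_pos n

lemma capped_le (n : ℕ) (R x : ℝ) (hR : 0 ≤ R) : |cappedHermite n R x| ≤ (domP n).eval |x| := by
  unfold cappedHermite
  split_ifs with h1 h2
  · exact abs_hermR_le _ _ _ (abs_le_abs_of_nonneg hR h1.le)
  · refine abs_hermR_le _ _ _ ?_
    rw [abs_neg, abs_of_nonneg hR]
    have := neg_abs_le x
    linarith
  · exact abs_hermR_le _ _ _ le_rfl

lemma measurable_normHermite (n : ℕ) : Measurable (normHermite n) := by
  have : normHermite n = fun x => (hermR n).eval x / Real.sqrt (Nat.factorial n) :=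
    funext (normHermite_eq n)
  rw [this]
  exact (hermR n).continuous.measurable.div_const _

lemma measurable_capped (n : ℕ) (R : ℝ) : Measurable (cappedHermite n R) := by
  unfold cappedHermite
  exact Measurable.ite measurableSet_Ioi measurable_const
    (Measurable.ite measurableSet_Iio measurable_const (measurable_normHermite n))

lemma capped_mul_le (n m : ℕ) (R x : ℝ) (hR : 0 ≤ R) :
    ‖cappedHermite n R x * cappedHermite m R x‖ ≤ (domP n * domP m).eval |x| := by
  rw [Real.norm_eq_abs, abs_mul, eval_mul]
  exact mul_le_mul (capped_le _ _ _ hR) (capped_le _ _ _ hR) (abs_nonneg _)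
    ((abs_nonneg _).trans (capped_le n _ _ hR))

lemma integrable_capped (n m : ℕ) (R : ℝ) (hR : 0 ≤ R) :
    Integrable (fun x => cappedHermite n R x * cappedHermite m R x) (gaussianReal 0 1) :=
  (integrable_poly_abs_g (domP n * domP m)).mono'
    ((measurable_capped n R).mul (measurable_capped m R)).aestronglyMeasurable
    (ae_of_all _ fun x => capped_mul_le n m R x hR)

lemma tendsto_capped (n m : ℕ) :
    Tendsto (fun R => ∫ x, cappedHermite n R x * cappedHermite m R x ∂(gaussianReal 0 1)) atTop
      (𝓝 (if n = m then 1 else 0)) := by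
  rw [← integral_normHermite]
  refine tendsto_integral_filter_of_dominated_convergence (fun x => (domP n * domP m).eval |x|)
    ?_ ?_ (integrable_poly_abs_g _) ?_
  · exact Eventually.of_forall fun R =>
      ((measurable_capped n R).mul (measurable_capped m R)).aestronglyMeasurable
  · filter_upwards [eventually_ge_atTop 0] with R hR
    exact ae_of_all _ fun x => capped_mul_le n m R x hR
  · refine ae_of_all _ fun x => ?_
    refine tendsto_const_nhds.congr' ?_
    filter_upwards [eventually_ge_atTop |x|] with R hR
    have h1 : ¬ x > R := not_lt.2 ((le_abs_self x).trans hR)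
    have h2 : ¬ x < -R := not_lt.2 (by linarith [neg_abs_le x])
    simp [cappedHermite, h1, h2]

/-- Gram matrix. -/
noncomputable def gramC {d : ℕ} (R : ℝ) (γ δ : Fin d → ℕ) : ℝ :=
  ∏ i, ∫ x, cappedHermite (γ i) R x * cappedHermite (δ i) R x ∂(gaussianReal 0 1)

lemma tendsto_gramC {d : ℕ} (γ δ : Fin d → ℕ) :
    Tendsto (fun R => gramC R γ δ) atTop (𝓝 (if γ = δ then 1 else 0)) := by
  have h := tendsto_finsetProd (univ : Finset (Fin d)) fun i _ => tendsto_capped (γ i) (δ i)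
  have e : (∏ i, if γ i = δ i then (1 : ℝ) else 0) = if γ = δ then 1 else 0 := by
    rw [Finset.prod_ite_zero]
    simp [funext_iff]
  rw [e] at h
  exact h

lemma integral_sq_eq {d : ℕ} (I : Finset (Fin d → ℕ)) (R : ℝ) (hR : 0 ≤ R)
    (x : (Fin d → ℕ) → ℝ) :
    (∫ t : Fin d → ℝ, (∑ γ ∈ I, x γ * ∏ i, cappedHermite (γ i) R (t i)) ^ 2
          ∂(Measure.pi fun _ : Fin d => gaussianReal 0 1)) =
    ∑ γ ∈ I, ∑ δ ∈ I, x γ * x δ * gramC R γ δ := by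
  have e : ∀ t : Fin d → ℝ, (∑ γ ∈ I, x γ * ∏ i, cappedHermite (γ i) R (t i)) ^ 2 =
      ∑ γ ∈ I, ∑ δ ∈ I, x γ * x δ *
        ∏ i, (cappedHermite (γ i) R (t i) * cappedHermite (δ i) R (t i)) := by
    intro t
    rw [sq, Finset.sum_mul_sum]
    refine Finset.sum_congr rfl fun γ _ => Finset.sum_congr rfl fun δ _ => ?_
    rw [Finset.prod_mul_distrib]
    ring
  have hi : ∀ γ δ : Fin d → ℕ, Integrable (fun t : Fin d → ℝ => x γ * x δ *
        ∏ i, (cappedHermite (γ i) R (t i) * cappedHermite (δ i) R (t i)))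
        (Measure.pi fun _ : Fin d => gaussianReal 0 1) := fun γ δ =>
    (Integrable.fintype_prod (f := fun i y => cappedHermite (γ i) R y * cappedHermite (δ i) R y)
      fun i => integrable_capped _ _ _ hR).const_mul _
  simp only [e]
  rw [integral_finsetSum _ fun γ _ => integrable_finsetSum _ fun δ _ => hi γ δ]
  refine Finset.sum_congr rfl fun γ _ => ?_
  rw [integral_finsetSum _ fun δ _ => hi γ δ]
  refine Finset.sum_congr rfl fun δ _ => ?_
  rw [integral_const_mul, gramC, integral_fintype_prod_eq_prod
    (f := fun i y => cappedHermite (γ i) R y * cappedHermite (δ i) R y)]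

end helpers

/-- **Riesz system property of capped Hermite products.**  For a finite set `I`
of multi-indices in `ℕ_0^d` and `ε > 0`, there is `R̄ > 0` such that for all
`R ≥ R̄` and all real coefficients `(x_γ)_{γ ∈ I}`,
`(1-ε) ∑ x_γ² ≤ ∫ (∑_{γ∈I} x_γ H̃_{γ,R,d}(t))² dμ_d(t) ≤ (1+ε) ∑ x_γ²`. -/
theorem cappedHermite_riesz_system
    (d : ℕ) (hd : 1 ≤ d) (I : Finset (Fin d → ℕ)) (ε : ℝ) (hε : 0 < ε) :
    ∃ Rbar : ℝ, 0 < Rbar ∧ ∀ R : ℝ, Rbar ≤ R → ∀ x : (Fin d → ℕ) → ℝ,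
      (1 - ε) * ∑ γ ∈ I, (x γ) ^ 2 ≤
        (∫ t : Fin d → ℝ, (∑ γ ∈ I, x γ * ∏ i, cappedHermite (γ i) R (t i)) ^ 2
          ∂(Measure.pi fun _ : Fin d => gaussianReal 0 1)) ∧
      (∫ t : Fin d → ℝ, (∑ γ ∈ I, x γ * ∏ i, cappedHermite (γ i) R (t i)) ^ 2
          ∂(Measure.pi fun _ : Fin d => gaussianReal 0 1))
        ≤ (1 + ε) * ∑ γ ∈ I, (x γ) ^ 2 := by
  have hη : 0 < ε / (#I + 1) := by positivity
  have hev : ∀ᶠ R in atTop, ∀ γ ∈ I, ∀ δ ∈ I,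
      |gramC R γ δ - (if γ = δ then 1 else 0)| < ε / (#I + 1) := by
    rw [Filter.eventually_all_finset]
    intro γ _
    rw [Filter.eventually_all_finset]
    intro δ _
    exact (Metric.tendsto_nhds.1 (tendsto_gramC γ δ) _ hη)
  obtain ⟨R0, hR0⟩ := eventually_atTop.1 hev
  refine ⟨max R0 1, by positivity, fun R hR x => ?_⟩
  have hRR := hR0 R ((le_max_left _ _).trans hR)
  have hRpos : 0 ≤ R := by linarith [le_max_right R0 1]
  rw [integral_sq_eq I R hRpos x]
  have hdiag : ∑ γ ∈ I, (x γ) ^ 2 =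
      ∑ γ ∈ I, ∑ δ ∈ I, x γ * x δ * (if γ = δ then 1 else 0) := by
    refine Finset.sum_congr rfl fun γ hγ => ?_
    simp [hγ, sq]
  have hbound : |∑ γ ∈ I, ∑ δ ∈ I, x γ * x δ * gramC R γ δ - ∑ γ ∈ I, (x γ) ^ 2| ≤
      ε * ∑ γ ∈ I, (x γ) ^ 2 := by
    have hS : 0 ≤ ∑ γ ∈ I, (x γ) ^ 2 := Finset.sum_nonneg fun _ _ => sq_nonneg _
    calc |∑ γ ∈ I, ∑ δ ∈ I, x γ * x δ * gramC R γ δ - ∑ γ ∈ I, (x γ) ^ 2|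
        = |∑ γ ∈ I, ∑ δ ∈ I, x γ * x δ * (gramC R γ δ - (if γ = δ then 1 else 0))| := by
          rw [hdiag]; simp only [← Finset.sum_sub_distrib, ← mul_sub]
      _ ≤ ∑ γ ∈ I, ∑ δ ∈ I, |x γ| * |x δ| * (ε / (#I + 1)) := by
          refine (Finset.abs_sum_le_sum_abs _ _).trans (Finset.sum_le_sum fun γ hγ => ?_)
          refine (Finset.abs_sum_le_sum_abs _ _).trans (Finset.sum_le_sum fun δ hδ => ?_)
          rw [abs_mul, abs_mul]
          exact mul_le_mul_of_nonneg_left (hRR γ hγ δ hδ).le (by positivity)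
      _ = (∑ γ ∈ I, |x γ|) ^ 2 * (ε / (#I + 1)) := by
          rw [sq, Finset.sum_mul_sum, Finset.sum_mul]
          simp only [Finset.sum_mul]
      _ ≤ (#I * ∑ γ ∈ I, (x γ) ^ 2) * (ε / (#I + 1)) := by
          gcongr
          have := sq_sum_le_card_mul_sum_sq (s := I) (f := fun γ => |x γ|)
          simpa only [sq_abs] using this
      _ = (#I / (#I + 1) : ℝ) * (ε * ∑ γ ∈ I, (x γ) ^ 2) := by ring
      _ ≤ 1 * (ε * ∑ γ ∈ I, (x γ) ^ 2) := by
          gcongr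
          rw [div_le_one (by positivity)]
          linarith
      _ = _ := one_mul _
  rw [abs_le] at hbound
  constructor <;> linarith [hbound.1, hbound.2]
end
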